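/- Let d ≥ 1 and let C ⊆ ℝ^d be a compact convex set containing the closed unit ball B^d. Suppose B^d is the unique ellipsoid of maximum volume contained in C, i.e., for every invertible d×d real matrix M and every a ∈ ℝ^d with M(B^d) + a ⊆ C one has |det M| ≤ 1, and |det M| = 1 implies M(B^d) + a = B^d. Then there exist an integer n with d+1 ≤ n ≤ d(d+3)/2, unit vectors u_1, …, u_n ∈ S^{d-1} ∩ bd C, and real numbers λ_1, …, λ_n > 0 such that I = Σ_{k=1}^n λ_k u_k⊗u_k and 0 = Σ_{k=1}^n λ_k u_k. -/

import Mathlib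

/-!
The ball can be improved to first order unless `(I / d, 0)` is a convex combination of the points
`(u ⊗ u, u)` with `u` a contact point. Indeed, if it is not, then (the set of contact points being
compact) Hahn-Banach gives a matrix `H` and a vector `h` with `tr H < 0` and `⟪H u + h, u⟫ > 0` at
every contact point. For small `δ > 0` the map `y ↦ y - δ (H y + h)` then sends the ball into `C`
(`eventually_perturbation_mem`) and has determinant `1 - δ tr H + O(δ²) > 1`
(`eventually_one_lt_det`), which contradicts maximality of the volume.

Carathéodory's theorem turns the convex combination into one over affinely independent points
`(u k ⊗ u k, u k)`. These lie on the hyperplane `tr = 1` of a space of dimension `d (d + 3) / 2`,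
hence the upper bound on their number; the lower bound holds because the `u k` span the space and
satisfy a nontrivial linear relation.
-/

open RealInnerProductSpace

/-! ### Compactness of convex hulls -/

/-- In finite dimension the convex hull of a compact set is compact: by Carathéodory it is the
image of `stdSimplex × s ^ N`, where `N - 1` is the dimension, under `(w, z) ↦ ∑ w i • z i`. -/
lemma IsCompact.convexHull_of_finiteDimensional {E : Type*} [AddCommGroup E] [Module ℝ E]
    [TopologicalSpace E] [IsTopologicalAddGroup E] [ContinuousSMul ℝ E] [FiniteDimensional ℝ E]
    {s : Set E} (hs : IsCompact s) : IsCompact (convexHull ℝ s) := by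
  rcases s.eq_empty_or_nonempty with rfl | ⟨p, hp⟩
  · simp
  set N := Module.finrank ℝ E + 1
  have hK : IsCompact ((stdSimplex ℝ (Fin N)) ×ˢ (Set.univ.pi fun _ : Fin N => s)) :=
    (isCompact_stdSimplex ℝ (Fin N)).prod (isCompact_univ_pi fun _ => hs)
  have himg := hK.image (f := fun q : (Fin N → ℝ) × (Fin N → E) => ∑ i, q.1 i • q.2 i)
    (by fun_prop)
  convert himg using 1
  apply Set.Subset.antisymm
  · intro x hx
    obtain ⟨ι, _, z, w, hz, hind, hw, hw1, hx⟩ := eq_pos_convex_span_of_mem_convexHull hx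
    have hcard : Fintype.card ι ≤ Fintype.card (Fin N) := by
      simpa [N] using hind.card_le_finrank_succ.trans
        (Nat.add_le_add_right (Submodule.finrank_le _) 1)
    obtain ⟨e⟩ := Function.Embedding.nonempty_of_card_le hcard
    refine ⟨(Function.extend e w 0, Function.extend e z fun _ => p), ⟨⟨fun j => ?_, ?_⟩, ?_⟩, ?_⟩
    · by_cases h : ∃ i, e i = j
      · obtain ⟨i, rfl⟩ := h
        simpa [e.injective.extend_apply] using (hw i).le
      · simp [Function.extend_apply' _ _ _ h]
    · rw [← hw1]
      refine (Fintype.sum_of_injective e e.injective _ _ (fun j hj => ?_) fun i => ?_).symm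
      · exact Function.extend_apply' _ _ _ hj
      · exact (e.injective.extend_apply _ _ _).symm
    · intro j _
      by_cases h : ∃ i, e i = j
      · obtain ⟨i, rfl⟩ := h
        simpa [e.injective.extend_apply] using hz ⟨i, rfl⟩
      · simpa [Function.extend_apply' _ _ _ h] using hp
    · rw [← hx]
      refine (Fintype.sum_of_injective e e.injective _ _ (fun j hj => ?_) fun i => ?_).symm
      · simp only
        rw [Function.extend_apply' _ _ _ hj]
        simp
      · simp [e.injective.extend_apply]
  · rintro _ ⟨q, ⟨⟨h0, h1⟩, h2⟩, rfl⟩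
    exact (convex_convexHull ℝ s).sum_mem (fun i _ => h0 i) h1
      fun i _ => subset_convexHull ℝ s (h2 i trivial)

/-! ### First-order optimality of the ball -/

open Filter Topology in
/-- A vector field `G` pointing outwards at every contact point moves the unit ball into `C` under
`y ↦ y - δ • G y` for all small `δ > 0`. Near a contact point the norm drops to first order in `δ`,
so the image lands in the ball itself; away from the contact points the ball lies in the interior
of `C`. Compactness of the ball makes this uniform. -/
lemma eventually_perturbation_mem {E : Type*} [NormedAddCommGroup E] [InnerProductSpace ℝ E]
    [ProperSpace E] {C : Set E} (hball : Metric.closedBall (0 : E) 1 ⊆ C) {G : E → E}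
    (hG : Continuous G)
    (hpos : ∀ u ∈ Metric.sphere (0 : E) 1 ∩ frontier C, 0 < inner ℝ (G u) u) :
    ∀ᶠ δ : ℝ in 𝓝 0, ∀ y ∈ Metric.closedBall (0 : E) 1, 0 < δ → y - δ • G y ∈ C := by
  have key : ∀ y ∈ Metric.closedBall (0 : E) 1, ∀ᶠ z : ℝ × E in 𝓝 (0, y),
      z.2 ∈ Metric.closedBall (0 : E) 1 → 0 < z.1 → z.2 - z.1 • G z.2 ∈ C := by
    intro y hy
    have hyn : ‖y‖ ≤ 1 := by simpa using hy
    by_cases hint : y ∈ interior C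
    · have hcont : Continuous fun z : ℝ × E => z.2 - z.1 • G z.2 := by fun_prop
      have := hcont.continuousAt (x := (0, y)) |>.eventually_mem
        (s := C) (by simpa using mem_interior_iff_mem_nhds.1 hint)
      filter_upwards [this] with z hz _ _ using hz
    · have hyf : y ∈ frontier C := ⟨subset_closure (hball hy), hint⟩
      have hy1 : ‖y‖ = 1 := by
        by_contra hne
        apply hint
        apply interior_mono (Metric.ball_subset_closedBall.trans hball)
        rw [Metric.isOpen_ball.interior_eq]
        simpa using lt_of_le_of_ne hyn hne
      have hp := hpos y ⟨by simpa using hy1, hyf⟩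
      have hcont : Continuous fun z : ℝ × E =>
          2 * inner ℝ (G z.2) z.2 - z.1 * ‖G z.2‖ ^ 2 := by fun_prop
      have := hcont.continuousAt (x := (0, y)) |>.eventually (lt_mem_nhds (a := 0)
        (by simpa using hp))
      filter_upwards [this] with z hz hzb hz0
      apply hball
      have hzn : ‖z.2‖ ≤ 1 := by simpa using hzb
      have hsq : ‖z.2 - z.1 • G z.2‖ ^ 2 =
          ‖z.2‖ ^ 2 - z.1 * (2 * inner ℝ (G z.2) z.2 - z.1 * ‖G z.2‖ ^ 2) := by
        rw [norm_sub_sq_real, norm_smul, real_inner_smul_right, real_inner_comm,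
          Real.norm_of_nonneg hz0.le]
        ring
      have hm := mul_pos hz0 hz
      have : ‖z.2 - z.1 • G z.2‖ ^ 2 ≤ 1 := by
        nlinarith [norm_nonneg z.2]
      have := (sq_le_one_iff₀ (norm_nonneg _)).1 this
      simpa using this
  have := (isCompact_closedBall (0 : E) 1).eventually_forall_of_forall_eventually
    (P := fun δ y => y ∈ Metric.closedBall (0 : E) 1 → 0 < δ → y - δ • G y ∈ C) key
  filter_upwards [this] with δ h y hy using h y hy hy

open Filter Topology in
/-- The determinant has derivative `-tr H > 0` at `δ = 0`. -/
lemma eventually_one_lt_det {d : ℕ} {H : Matrix (Fin d) (Fin d) ℝ} (hH : H.trace < 0) :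
    ∀ᶠ δ : ℝ in 𝓝 0, 0 < δ → 1 < (1 - δ • H).det := by
  set p := (1 + (Polynomial.X : Polynomial ℝ) • (-H).map ⇑Polynomial.C).det.divX.divX
  have hcont : Continuous fun δ : ℝ => -H.trace + p.eval δ * δ := by fun_prop
  have := hcont.continuousAt (x := 0) |>.eventually (lt_mem_nhds (a := 0) (by simpa using hH))
  filter_upwards [this] with δ h hδ
  have e : (1 - δ • H : Matrix (Fin d) (Fin d) ℝ) = 1 + δ • (-H) := by
    rw [smul_neg, sub_eq_add_neg]
  rw [e, Matrix.det_one_add_smul, Matrix.trace_neg]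
  nlinarith [mul_pos hδ h]

/-- The first-order optimality condition of the ball: no affine vector field `y ↦ H y + h` with
`tr H < 0` points outwards at all contact points. -/
lemma no_improving_direction {d : ℕ} {C : Set (EuclideanSpace ℝ (Fin d))}
    (hball : Metric.closedBall (0 : EuclideanSpace ℝ (Fin d)) 1 ⊆ C)
    (hmax : ∀ (M : Matrix (Fin d) (Fin d) ℝ) (a : EuclideanSpace ℝ (Fin d)),
      M.det ≠ 0 →
      (fun x => Matrix.toEuclideanLin M x + a) '' Metric.closedBall 0 1 ⊆ C → |M.det| ≤ 1)
    (H : Matrix (Fin d) (Fin d) ℝ) (h : EuclideanSpace ℝ (Fin d)) (hH : H.trace < 0)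
    (hpos : ∀ u ∈ Metric.sphere (0 : EuclideanSpace ℝ (Fin d)) 1 ∩ frontier C,
      0 < inner ℝ (Matrix.toEuclideanLin H u + h) u) : False := by
  have hG : Continuous fun u => Matrix.toEuclideanLin H u + h :=
    (LinearMap.continuous_of_finiteDimensional _).add continuous_const
  obtain ⟨δ, ⟨h1, h2⟩, hδ⟩ := (((eventually_perturbation_mem hball hG hpos).and
    (eventually_one_lt_det hH)).filter_mono nhdsWithin_le_nhds |>.and
      (self_mem_nhdsWithin (s := Set.Ioi (0 : ℝ)))).exists
  have hd := h2 hδ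
  have := hmax (1 - δ • H) (-(δ • h)) (by linarith) (by
    rintro _ ⟨y, hy, rfl⟩
    convert h1 y hy hδ using 1
    simp only [map_sub, map_smul, LinearMap.sub_apply, LinearMap.smul_apply, smul_add,
      Matrix.toLpLin_one, LinearMap.id_apply]
    abel)
  exact absurd (hd.trans_le (le_abs_self _)) this.not_gt

/-! ### Separation -/

/-- The pair `(u ⊗ u, u)`, flattened to a vector of coordinates. -/
def johnPoint {d : ℕ} (u : EuclideanSpace ℝ (Fin d)) : (Fin d × Fin d) ⊕ Fin d → ℝ :=
  Sum.elim (fun p => u p.1 * u p.2) fun i => u i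

/-- The pair `(I / d, 0)`, flattened to a vector of coordinates. -/
noncomputable def johnTarget (d : ℕ) : (Fin d × Fin d) ⊕ Fin d → ℝ :=
  Sum.elim (fun p => if p.1 = p.2 then (d : ℝ)⁻¹ else 0) fun _ => 0

/-- If `(I / d, 0)` were outside the hull, a separating functional, shifted by a multiple of the
trace, would be an affine field contradicting `no_improving_direction`. -/
lemma johnTarget_mem_convexHull {d : ℕ} (hd : 1 ≤ d) {C : Set (EuclideanSpace ℝ (Fin d))}
    (hball : Metric.closedBall (0 : EuclideanSpace ℝ (Fin d)) 1 ⊆ C)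
    (hmax : ∀ (M : Matrix (Fin d) (Fin d) ℝ) (a : EuclideanSpace ℝ (Fin d)),
      M.det ≠ 0 →
      (fun x => Matrix.toEuclideanLin M x + a) '' Metric.closedBall 0 1 ⊆ C → |M.det| ≤ 1) :
    johnTarget d ∈ convexHull ℝ (johnPoint ''
      (Metric.sphere (0 : EuclideanSpace ℝ (Fin d)) 1 ∩ frontier C)) := by
  by_contra hnot
  have hd0 : (d : ℝ) ≠ 0 := by positivity
  have hcont : Continuous (johnPoint (d := d)) := by
    refine continuous_pi fun k => ?_
    rcases k with p | i <;> simp only [johnPoint, Sum.elim_inl, Sum.elim_inr] <;> fun_prop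
  have hcpt := (((isCompact_sphere (0 : EuclideanSpace ℝ (Fin d)) 1).inter_right
    (isClosed_frontier (s := C))).image hcont).convexHull_of_finiteDimensional
  obtain ⟨f, c, hf1, hf2⟩ := geometric_hahn_banach_point_closed (convex_convexHull ℝ _)
    hcpt.isClosed hnot
  have hf : ∀ v, f v = ∑ i, ∑ j, v (Sum.inl (i, j)) * f (Pi.single (Sum.inl (i, j)) 1)
      + ∑ i, v (Sum.inr i) * f (Pi.single (Sum.inr i) 1) := by
    intro v
    conv_lhs => rw [pi_eq_sum_univ' v]
    simp [Fintype.sum_sum_type, Fintype.sum_prod_type]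
  set H : Matrix (Fin d) (Fin d) ℝ := Matrix.of fun i j => f (Pi.single (Sum.inl (i, j)) 1)
  set h : EuclideanSpace ℝ (Fin d) := WithLp.toLp 2 fun i => f (Pi.single (Sum.inr i) 1)
  refine no_improving_direction hball hmax (H - c • 1) h ?_ ?_
  · have ht : f (johnTarget d) = H.trace / d := by
      rw [hf]
      simp [johnTarget, Matrix.trace, H, Finset.mul_sum, div_eq_inv_mul]
    have hdpos : (0 : ℝ) < d := by positivity
    rw [ht, div_lt_iff₀ hdpos] at hf1
    simpa [Matrix.trace_sub, Matrix.trace_smul] using hf1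
  · intro u hu
    have hfu := hf2 _ (subset_convexHull ℝ _ ⟨u, hu, rfl⟩)
    have hu1 : inner ℝ u u = (1 : ℝ) := by
      have : ‖u‖ = 1 := by simpa using hu.1
      rw [real_inner_self_eq_norm_sq, this, one_pow]
    have e : f (johnPoint u) = inner ℝ (Matrix.toEuclideanLin H u + h) u := by
      rw [hf]
      simp [johnPoint, inner_add_left, PiLp.inner_apply, Matrix.toLpLin_apply,
        Matrix.mulVec, dotProduct, H, h, Finset.mul_sum]
      exact Finset.sum_congr rfl fun i _ => Finset.sum_congr rfl fun j _ => by ring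
    have e2 : inner ℝ (Matrix.toEuclideanLin (H - c • 1) u + h) u
        = inner ℝ (Matrix.toEuclideanLin H u + h) u - c := by
      simp only [map_sub, map_smul, LinearMap.sub_apply, LinearMap.smul_apply,
        Matrix.toLpLin_one, LinearMap.id_apply, inner_add_left, inner_sub_left,
        real_inner_smul_left, hu1]
      ring
    rw [e2, ← e]
    linarith

/-! ### Bounds on the number of contact points -/

/-- Affinely independent points `(u k ⊗ u k, u k)` with `u k` of norm one lie on the hyperplane
`tr = 1`, so they are linearly independent; being symmetric, they come from a space of dimension
`d (d + 1) / 2 + d`, modelled by functions on `Sym2 (Fin d) ⊕ Fin d`. -/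
lemma card_le_of_affineIndependent {d : ℕ} {ι : Type*} [Fintype ι]
    (u : ι → EuclideanSpace ℝ (Fin d)) (hu : ∀ k, ‖u k‖ = 1)
    (hind : AffineIndependent ℝ fun k => johnPoint (u k)) :
    Fintype.card ι ≤ d * (d + 3) / 2 := by
  have hlin : LinearIndependent ℝ fun k => johnPoint (u k) := by
    rw [linearIndependent_iff']
    intro s w hw
    refine affineIndependent_iff.1 hind s w ?_ hw
    have htr : ∀ k, ∑ i, johnPoint (u k) (Sum.inl (i, i)) = 1 := by
      intro k
      have := EuclideanSpace.real_norm_sq_eq (u k)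
      rw [hu k] at this
      simp only [johnPoint, Sum.elim_inl]
      rw [← one_pow 2, this]
      exact Finset.sum_congr rfl fun i _ => by ring
    have h0 := congrArg (fun v : (Fin d × Fin d) ⊕ Fin d → ℝ => ∑ i, v (Sum.inl (i, i))) hw
    simp only [Finset.sum_apply, Pi.smul_apply, Pi.zero_apply, smul_eq_mul,
      Finset.sum_const_zero] at h0
    rw [Finset.sum_comm] at h0
    simpa [← Finset.mul_sum, htr] using h0
  let ψ : ι → (Sym2 (Fin d) ⊕ Fin d → ℝ) := fun k =>
    Sum.elim (Sym2.lift ⟨fun i j => u k i * u k j, fun i j => mul_comm _ _⟩) fun i => u k i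
  have hψ : LinearIndependent ℝ ψ := by
    apply LinearIndependent.of_comp
      (LinearMap.funLeft ℝ ℝ (Sum.map (fun p : Fin d × Fin d => s(p.1, p.2)) id))
    convert hlin using 1
    funext k x
    rcases x with p | i <;> simp [ψ, johnPoint, LinearMap.funLeft]
  have hcard := hψ.fintype_card_le_finrank
  rw [Module.finrank_fintype_fun_eq_card, Fintype.card_sum, Sym2.card, Fintype.card_fin,
    Nat.choose_two_right, Nat.add_sub_cancel] at hcard
  have : d * (d + 3) / 2 = (d + 1) * d / 2 + d := by
    rw [show d * (d + 3) = (d + 1) * d + d * 2 by ring, Nat.add_mul_div_right _ _ two_pos]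
  omega

/-- The vectors in a decomposition of the identity span the space, so `d` of them would be a
basis, which rules out the relation `∑ lam k • u k = 0`. -/
lemma lt_card_of_decomposition {d n : ℕ} (hd : 1 ≤ d) (u : Fin n → EuclideanSpace ℝ (Fin d))
    (lam : Fin n → ℝ) (hlam : ∀ k, 0 < lam k)
    (h1 : (1 : Matrix (Fin d) (Fin d) ℝ) = ∑ k, lam k • Matrix.vecMulVec (u k) (u k))
    (h0 : 0 = ∑ k, lam k • u k) : d + 1 ≤ n := by
  have hspan : ⊤ ≤ Submodule.span ℝ (Set.range u) := by
    intro x _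
    have hx : x = ∑ k, (lam k * (u k ⬝ᵥ x.ofLp)) • u k := by
      have := congrArg (fun M : Matrix (Fin d) (Fin d) ℝ => M.mulVec x.ofLp) h1
      simp only [Matrix.one_mulVec, Matrix.sum_mulVec, Matrix.smul_mulVec] at this
      ext i
      have := congrFun this i
      rw [this]
      simp [Matrix.vecMulVec_mulVec, mul_assoc]
    rw [hx]
    exact Submodule.sum_mem _ fun k _ => Submodule.smul_mem _ _ (Submodule.subset_span ⟨k, rfl⟩)
  have hge : d ≤ n := by
    have := finrank_range_le_card (R := ℝ) u
    rw [Set.finrank, top_le_iff.1 hspan, finrank_top] at this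
    simpa using this
  rcases hge.lt_or_eq with h | rfl
  · exact h
  · have hli := linearIndependent_of_top_le_span_of_card_eq_finrank hspan (by simp)
    have := Fintype.linearIndependent_iff.1 hli lam h0.symm ⟨0, hd⟩
    exact absurd this (hlam _).ne'

/-! ### The decomposition of the identity -/

/-- John's theorem, hard direction, general case: if the closed unit ball is the unique
ellipsoid of maximal volume inside the compact convex body `C ⊇ B^d`, then there are
`d+1 ≤ n ≤ d(d+3)/2` contact points `u k` and positive weights `lam k` with
`I = ∑ lam k • u k ⊗ u k` and `0 = ∑ lam k • u k`. -/
theorem john_general_hard (d : ℕ) (hd : 1 ≤ d) (C : Set (EuclideanSpace ℝ (Fin d)))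
    (hCcpt : IsCompact C) (hCconv : Convex ℝ C)
    (hball : Metric.closedBall (0 : EuclideanSpace ℝ (Fin d)) 1 ⊆ C)
    (hmax : ∀ (M : Matrix (Fin d) (Fin d) ℝ) (a : EuclideanSpace ℝ (Fin d)),
      M.det ≠ 0 →
      (fun x => Matrix.toEuclideanLin M x + a) '' Metric.closedBall 0 1 ⊆ C →
      |M.det| ≤ 1 ∧ (|M.det| = 1 →
        (fun x => Matrix.toEuclideanLin M x + a) '' Metric.closedBall 0 1 =
          Metric.closedBall (0 : EuclideanSpace ℝ (Fin d)) 1)) :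
    ∃ n : ℕ, d + 1 ≤ n ∧ n ≤ d * (d + 3) / 2 ∧
      ∃ (u : Fin n → EuclideanSpace ℝ (Fin d)) (lam : Fin n → ℝ),
        (∀ k, u k ∈ Metric.sphere (0 : EuclideanSpace ℝ (Fin d)) 1 ∩ frontier C) ∧
        (∀ k, 0 < lam k) ∧
        (1 : Matrix (Fin d) (Fin d) ℝ) = ∑ k, lam k • Matrix.vecMulVec (u k) (u k) ∧
        (0 : EuclideanSpace ℝ (Fin d)) = ∑ k, lam k • u k := by
  have hmem := johnTarget_mem_convexHull hd hball fun M a h1 h2 => (hmax M a h1 h2).1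
  obtain ⟨ι, _, z, w, hz, hind, hw, -, hsum⟩ := eq_pos_convex_span_of_mem_convexHull hmem
  choose u hu huz using fun k => hz ⟨k, rfl⟩
  obtain rfl : (fun k => johnPoint (u k)) = z := funext huz
  have hd0 : (d : ℝ) ≠ 0 := by positivity
  -- The hull has total mass one and gives `I / d`; scaling by `d` gives `I`.
  let e := (Fintype.equivFin ι).symm
  have hlam : ∀ k, 0 < (d : ℝ) * w (e k) := fun k => mul_pos (by positivity) (hw _)
  have h1 : (1 : Matrix (Fin d) (Fin d) ℝ) =
      ∑ k, ((d : ℝ) * w (e k)) • Matrix.vecMulVec (u (e k)) (u (e k)) := by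
    ext i j
    have := congrFun hsum (Sum.inl (i, j))
    simp only [johnPoint, johnTarget, Finset.sum_apply, Pi.smul_apply, Sum.elim_inl,
      smul_eq_mul] at this
    rw [e.sum_comp fun k => ((d : ℝ) * w k) • Matrix.vecMulVec (u k) (u k)]
    simp only [Matrix.sum_apply, Matrix.smul_apply, Matrix.vecMulVec_apply, smul_eq_mul,
      mul_assoc, ← Finset.mul_sum, this, Matrix.one_apply]
    split_ifs <;> simp [hd0]
  have h0 : (0 : EuclideanSpace ℝ (Fin d)) = ∑ k, ((d : ℝ) * w (e k)) • u (e k) := by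
    ext i
    have := congrFun hsum (Sum.inr i)
    simp only [johnPoint, johnTarget, Finset.sum_apply, Pi.smul_apply, Sum.elim_inr,
      smul_eq_mul] at this
    rw [e.sum_comp fun k => ((d : ℝ) * w k) • u k]
    simp [mul_assoc, ← Finset.mul_sum, this]
  exact ⟨Fintype.card ι, lt_card_of_decomposition hd _ _ hlam h1 h0,
    card_le_of_affineIndependent u (fun k => by simpa using (hu k).1) hind,
    fun k => u (e k), fun k => d * w (e k), fun k => hu _, hlam, h1, h0⟩
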